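/- Let λ, μ, ν be partitions of k with g_{λμν} ≠ 0, and assume the stretching property that g_{Nλ, Nμ, Nν} ≠ 0 for all positive integers N. Then H(λ̄) ≤ H(μ̄) + H(ν̄), where λ̄ = λ/k and H is the Shannon entropy. -/

import Mathlib

open Finset Nat

noncomputable section

/-- The cells of the Young diagram of `lam` (row and column indices below `k`). -/
def youngCells (k : ℕ) (lam : ℕ → ℕ) : Finset (ℕ × ℕ) :=
  (range k ×ˢ range k).filter fun c => c.2 < lam c.1

/-- `lam` is a partition of `k`: a weakly decreasing sequence of naturals summing to `k`
(supported on the first `k` entries). -/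
def IsPartitionOf (k : ℕ) (lam : ℕ → ℕ) : Prop :=
  Antitone lam ∧ (∀ i, k ≤ i → lam i = 0) ∧ ∑ i ∈ range k, lam i = k

/-- The Young symmetry operator `e(T)` in the group algebra `ℂ[S_k]`, for a tableau given by
a numbering `t : Fin k → ℕ × ℕ` of the boxes: the signed sum over the column group times the
sum over the row group. -/
def youngSym (k : ℕ) (t : Fin k → ℕ × ℕ) : MonoidAlgebra ℂ (Equiv.Perm (Fin k)) :=
  (∑ π ∈ univ.filter (fun π : Equiv.Perm (Fin k) => ∀ j, (t (π j)).2 = (t j).2),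
      MonoidAlgebra.single π ((Equiv.Perm.sign π : ℤ) : ℂ)) *
    ∑ π ∈ univ.filter (fun π : Equiv.Perm (Fin k) => ∀ j, (t (π j)).1 = (t j).1),
      MonoidAlgebra.single π (1 : ℂ)

/-- The left ideal `ℂ[S_k]·e(T)` generated by the Young symmetry operator of the tableau `t`;
it carries the irreducible representation `U_lam` of `S_k` for `lam` the shape of `t`. -/
def youngIdeal (k : ℕ) (t : Fin k → ℕ × ℕ) :
    Submodule ℂ (MonoidAlgebra ℂ (Equiv.Perm (Fin k))) :=
  LinearMap.range (LinearMap.mulRight ℂ (youngSym k t))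

/-- The value at `π` of the character of the representation of `S_k` on the left ideal
`ℂ[S_k]·e(T)`, i.e. the trace of left multiplication by `π` on this ideal.  For `t` a
tableau of shape `lam ⊢ k` this is the irreducible character `χ_lam(π)`. -/
def youngIdealChar (k : ℕ) (t : Fin k → ℕ × ℕ) (π : Equiv.Perm (Fin k)) : ℂ :=
  LinearMap.trace ℂ (youngIdeal k t)
    ((LinearMap.mulLeft ℂ (MonoidAlgebra.single π (1 : ℂ))).restrict
      (fun x hx => by
        obtain ⟨a, rfl⟩ := hx
        exact ⟨MonoidAlgebra.single π (1 : ℂ) * a, by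
          simp only [LinearMap.mulRight_apply, LinearMap.mulLeft_apply, mul_assoc]⟩))

/-- `chi` is the family of irreducible characters of the symmetric groups: `chi k lam` is the
character of the irreducible representation of `S_k` indexed by the partition `lam ⊢ k`,
realised on the left ideal generated by the Young symmetry operator of any tableau of
shape `lam`. -/
def IsCharacterFamily (chi : (k : ℕ) → (ℕ → ℕ) → Equiv.Perm (Fin k) → ℂ) : Prop :=
  ∀ (k : ℕ) (lam : ℕ → ℕ), IsPartitionOf k lam →
    ∀ t : Fin k → ℕ × ℕ, Set.BijOn t Set.univ ↑(youngCells k lam) →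
      ∀ π, chi k lam π = youngIdealChar k t π

/-- `g` is the family of Kronecker coefficients associated to the character family `chi`:
`g k lam mu nu` is the multiplicity of `U_lam` in `U_mu ⊗ U_nu`, given by
`(1/k!) Σ_{π ∈ S_k} χ_lam(π) χ_mu(π) χ_nu(π)`. -/
def IsKroneckerFamily (chi : (k : ℕ) → (ℕ → ℕ) → Equiv.Perm (Fin k) → ℂ)
    (g : (k : ℕ) → (ℕ → ℕ) → (ℕ → ℕ) → (ℕ → ℕ) → ℕ) : Prop :=
  ∀ (k : ℕ) (lam mu nu : ℕ → ℕ), IsPartitionOf k lam → IsPartitionOf k mu →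
    IsPartitionOf k nu →
      (g k lam mu nu : ℂ) = (k ! : ℂ)⁻¹ * ∑ π : Equiv.Perm (Fin k),
        chi k lam π * chi k mu π * chi k nu π

/-! The character `χ_lam` is a sum of matrix coefficients, each of which changes sign under the
transpositions within the columns of some tableau of shape `lam`; likewise `χ_mu` and `χ_nu` are
sums of functions invariant under the transpositions within the rows of some tableau. If two numbers
shared a column of `T`, a row of `U` and a row of `V`, then their transposition would turn the sum
of the product of three such functions into its own negative. So `g_{lam mu nu} ≠ 0` yields tableaux
`T`, `U`, `V` for which the pairs (row in `U`, row in `V`) are distinct along every column of `T`.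

Weight the pairs by the product law `q = mu/k ⊗ nu/k`, and let `p₀ ≥ p₁ ≥ ⋯` be the values of `q`.
The product of `q` over all `k` numbers is `exp (-k (H (mu/k) + H (nu/k)))`. A column of `T` of
height `h` contributes at most `p₀ ⋯ p_{h-1}`, so the product is at most `∏ p_i ^ lam_i`, which by
Gibbs' inequality is at most `exp (-k H (lam/k))`. -/

section Rearrangement

theorem prod_le_prod_range_card {R : Type*} [CommSemiring R] [PartialOrder R] [IsOrderedRing R]
    {p : ℕ → R} (hp : Antitone p) (hp0 : ∀ i, 0 ≤ p i) (s : Finset ℕ) :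
    ∏ i ∈ s, p i ≤ ∏ i ∈ range #s, p i := by
  induction s using Finset.induction_on_max with
  | empty => simp
  | insert a s hlt ih =>
    have ha : a ∉ s := fun h => (hlt a h).false
    have hcard : #s ≤ a := by
      simpa using card_le_card fun b hb => mem_range.2 (hlt b hb)
    rw [prod_insert ha, card_insert_of_notMem ha, prod_range_succ, mul_comm]
    exact mul_le_mul ih (hp hcard) (hp0 a) (prod_nonneg fun i _ => hp0 i)

theorem eq_range_card_of_isLowerSet {s : Finset ℕ} (hs : IsLowerSet (s : Set ℕ)) :
    s = range #s := by
  refine eq_of_subset_of_card_le (fun i hi => ?_) (card_range _).le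
  have hsub : range (i + 1) ⊆ s := fun j hj => hs (Nat.lt_succ_iff.1 (mem_range.1 hj)) hi
  simpa using card_le_card hsub

theorem exists_equiv_fin_antitone {β R : Type*} [Fintype β] [LinearOrder R] (q : β → R) :
    ∃ e : Fin (Fintype.card β) ≃ β, Antitone (q ∘ e) := by
  let enum := (Fintype.equivFin β).symm
  exact ⟨(Tuple.sort (OrderDual.toDual ∘ q ∘ enum)).trans enum,
    Tuple.monotone_sort (OrderDual.toDual ∘ q ∘ enum)⟩

theorem exists_antitone_rearrangement {β R : Type*} [Fintype β] [AddCommMonoid R] [LinearOrder R]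
    [TopologicalSpace R] {q : β → R} (hq : ∀ b, 0 ≤ q b) :
    ∃ (p : ℕ → R) (rank : β → ℕ), Antitone p ∧ (∀ i, 0 ≤ p i) ∧ rank.Injective ∧
      (∀ b, p (rank b) = q b) ∧ HasSum p (∑ b, q b) := by
  obtain ⟨e, he⟩ := exists_equiv_fin_antitone q
  let rank : β → ℕ := fun b => e.symm b
  have hrank : rank.Injective := Fin.val_injective.comp e.symm.injective
  let p : ℕ → R := Function.extend rank q 0
  have hp : ∀ b, p (rank b) = q b := hrank.extend_apply q 0
  have hp_fin : ∀ i : Fin (Fintype.card β), p i = q (e i) := fun i => by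
    simpa only [rank, Equiv.symm_apply_apply] using hp (e i)
  have hp_zero : ∀ i, Fintype.card β ≤ i → p i = 0 := fun i hi =>
    Function.extend_apply' _ _ _ fun ⟨b, hb⟩ =>
      ((e.symm b).is_lt.trans_le hi).ne hb
  have hp0 : ∀ i, 0 ≤ p i := fun i => by
    obtain hi | hi := lt_or_ge i (Fintype.card β)
    · exact (hq _).trans_eq (hp_fin ⟨i, hi⟩).symm
    · exact (hp_zero i hi).ge
  refine ⟨p, rank, fun i j hij => ?_, hp0, hrank, hp,
    (hasSum_extend_zero hrank).2 (hasSum_fintype q)⟩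
  obtain hj | hj := lt_or_ge j (Fintype.card β)
  · rw [hp_fin ⟨j, hj⟩, hp_fin ⟨i, hij.trans_lt hj⟩]
    exact he (Fin.mk_le_mk.2 hij)
  · exact (hp_zero j hj).trans_le (hp0 i)

end Rearrangement

section TypeProbability

theorem pow_le_div_pow_mul_exp {x N : ℝ} {n : ℕ} (hx : 0 ≤ x) (hnN : n ≤ N) :
    x ^ n ≤ (n / N) ^ n * Real.exp (N * x - n) := by
  obtain rfl | hpos := n.eq_zero_or_pos
  · simpa using mul_nonneg (by simpa using hnN) hx
  have hn : (0 : ℝ) < n := Nat.cast_pos.2 hpos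
  have hN : 0 < N := hn.trans_le hnN
  have hexp : x ≤ n / N * Real.exp (N * x / n - 1) := by
    have htangent := Real.add_one_le_exp (N * x / n - 1)
    calc x = n / N * (N * x / n - 1 + 1) := by field_simp; ring
      _ ≤ n / N * Real.exp (N * x / n - 1) := by gcongr
  calc x ^ n ≤ (n / N * Real.exp (N * x / n - 1)) ^ n := pow_le_pow_left₀ hx hexp n
    _ = (n / N) ^ n * Real.exp (N * x - n) := by
        rw [mul_pow, ← Real.exp_nat_mul]
        congr 2
        field_simp

theorem prod_pow_le_prod_div_sum_pow {ι : Type*} (s : Finset ι) (n : ι → ℕ) {p : ι → ℝ}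
    (hp : ∀ i ∈ s, 0 ≤ p i) (hsum : ∑ i ∈ s, p i ≤ 1) :
    ∏ i ∈ s, p i ^ n i ≤ ∏ i ∈ s, ((n i : ℝ) / (∑ j ∈ s, n j : ℕ)) ^ n i := by
  set N := ∑ j ∈ s, n j
  have hfactor : ∀ i ∈ s, p i ^ n i ≤ ((n i : ℝ) / N) ^ n i * Real.exp (N * p i - n i) :=
    fun i hi => pow_le_div_pow_mul_exp (hp i hi)
      (Nat.cast_le.2 (single_le_sum_of_canonicallyOrdered hi))
  have hexponent : ∑ i ∈ s, (N * p i - n i) ≤ 0 := by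
    rw [sum_sub_distrib, ← mul_sum, ← Nat.cast_sum]
    exact sub_nonpos.2 (mul_le_of_le_one_right N.cast_nonneg hsum)
  calc ∏ i ∈ s, p i ^ n i ≤ ∏ i ∈ s, ((n i : ℝ) / N) ^ n i * Real.exp (N * p i - n i) :=
        prod_le_prod (fun i hi => pow_nonneg (hp i hi) _) hfactor
    _ = (∏ i ∈ s, ((n i : ℝ) / N) ^ n i) * Real.exp (∑ i ∈ s, (N * p i - n i)) := by
        rw [prod_mul_distrib, Real.exp_sum]
    _ ≤ ∏ i ∈ s, ((n i : ℝ) / N) ^ n i :=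
        mul_le_of_le_one_right (prod_nonneg fun i _ => by positivity)
          (Real.exp_le_one_iff.2 hexponent)

/-- The probability that `k` independent letters with law `n / k` on `{0, …, k - 1}` spell a given
word in which each letter `i` occurs `n i` times. It equals `exp (-k * H (n / k))` and so turns
entropy inequalities into inequalities between products. -/
def typeProb (k : ℕ) (n : ℕ → ℕ) : ℝ :=
  ∏ i ∈ range k, ((n i : ℝ) / k) ^ n i

theorem typeProb_pos (k : ℕ) (n : ℕ → ℕ) : 0 < typeProb k n := by
  refine prod_pos fun i hi => ?_
  have hk : 0 < k := i.zero_le.trans_lt (mem_range.1 hi)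
  obtain h0 | hpos := (n i).eq_zero_or_pos
  · simp [h0]
  · positivity

theorem sum_div_mul_log_div_eq (k : ℕ) (n : ℕ → ℕ) :
    ∑ i ∈ range k, ((n i : ℝ) / k) * Real.log ((n i : ℝ) / k) = Real.log (typeProb k n) / k := by
  have hfactor := prod_ne_zero_iff.1 (typeProb_pos k n).ne'
  rw [typeProb, Real.log_prod hfactor, sum_div]
  refine sum_congr rfl fun i _ => ?_
  rw [Real.log_pow]
  ring

end TypeProbability

section Tableaux

theorem injOn_filter_eq_of_injective_prodMk {α β γ : Type*} [Fintype α] [DecidableEq β] {r : α → β}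
    {f : α → γ} (h : Function.Injective fun a => (r a, f a)) (b : β) :
    Set.InjOn f ({a | r a = b} : Finset α) := fun _ hi _ hj hij =>
  h (Prod.ext ((mem_filter.1 hi).2.trans (mem_filter.1 hj).2.symm) hij)

variable {k : ℕ} {lam mu nu : ℕ → ℕ} {t u v : Fin k → ℕ × ℕ}

theorem IsPartitionOf.apply_le (h : IsPartitionOf k lam) (i : ℕ) : lam i ≤ k := by
  obtain hi | hi := lt_or_ge i k
  · exact (single_le_sum_of_canonicallyOrdered (mem_range.2 hi)).trans_eq h.2.2
  · exact (h.2.1 i hi).trans_le k.zero_le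

theorem mem_youngCells {c : ℕ × ℕ} :
    c ∈ youngCells k lam ↔ (c.1 < k ∧ c.2 < k) ∧ c.2 < lam c.1 := by
  simp only [youngCells, mem_filter, mem_product, mem_range]

@[to_additive]
theorem prod_youngCells {M : Type*} [CommMonoid M] (h : IsPartitionOf k lam) (F : ℕ × ℕ → M) :
    ∏ c ∈ youngCells k lam, F c = ∏ i ∈ range k, ∏ j ∈ range (lam i), F (i, j) := by
  refine prod_finset_product _ _ _ fun c => ?_
  have := h.apply_le c.1
  simp only [mem_youngCells, mem_range]
  lia

theorem card_youngCells (h : IsPartitionOf k lam) : #(youngCells k lam) = k := by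
  rw [card_eq_sum_ones, sum_youngCells h]
  simpa only [sum_const, card_range, smul_eq_mul, mul_one] using h.2.2

/-- `t` numbers the cells of the Young diagram of `lam` bijectively. -/
def IsTableau (k : ℕ) (lam : ℕ → ℕ) (t : Fin k → ℕ × ℕ) : Prop :=
  Set.BijOn t Set.univ ↑(youngCells k lam)

theorem IsPartitionOf.exists_isTableau (h : IsPartitionOf k lam) : ∃ t, IsTableau k lam t := by
  let e := ((youngCells k lam).equivFinOfCardEq (card_youngCells h)).symm
  refine ⟨fun i => e i, fun i _ => (e i).2, (Subtype.val_injective.comp e.injective).injOn,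
    fun c hc => ⟨e.symm ⟨c, hc⟩, trivial, congrArg Subtype.val (e.apply_symm_apply _)⟩⟩

namespace IsTableau

theorem injective (ht : IsTableau k lam t) : t.Injective :=
  Set.injOn_univ.1 ht.injOn

theorem injective_swap (ht : IsTableau k lam t) :
    Function.Injective fun j => ((t j).2, (t j).1) :=
  Prod.swap_injective.comp ht.injective

theorem comp_perm (ht : IsTableau k lam t) (x : Equiv.Perm (Fin k)) : IsTableau k lam (t ∘ x) :=
  Set.BijOn.comp ht (Set.bijOn_univ.2 x.bijective)

theorem apply_mem (ht : IsTableau k lam t) (j : Fin k) : t j ∈ youngCells k lam :=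
  ht.mapsTo (Set.mem_univ j)

theorem prod_row (ht : IsTableau k lam t) (h : IsPartitionOf k lam) {M : Type*} [CommMonoid M]
    (F : ℕ → M) :
    ∏ j, F (t j).1 = ∏ i ∈ range k, F i ^ lam i := by
  calc ∏ j, F (t j).1 = ∏ c ∈ youngCells k lam, F c.1 :=
        prod_nbij t (fun j _ => ht.apply_mem j) ht.injective.injOn
          (by simpa using ht.surjOn) fun _ _ => rfl
    _ = ∏ i ∈ range k, F i ^ lam i := by simp only [prod_youngCells h, prod_const, card_range]

theorem image_row_column (ht : IsTableau k lam t) (h : Antitone lam) (c : ℕ) :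
    image (fun j => (t j).1) {j | (t j).2 = c} = range #{j | (t j).2 = c} := by
  rw [← Finset.card_image_of_injOn (injOn_filter_eq_of_injective_prodMk ht.injective_swap c)]
  refine eq_range_card_of_isLowerSet fun a b hba ha => ?_
  obtain ⟨j, hj, rfl⟩ := mem_image.1 ha
  obtain rfl : (t j).2 = c := (mem_filter.1 hj).2
  have hcell := mem_youngCells.1 (ht.apply_mem j)
  have hbelow : (b, (t j).2) ∈ youngCells k lam := mem_youngCells.2
    ⟨⟨hba.trans_lt hcell.1.1, hcell.1.2⟩, hcell.2.trans_le (h hba)⟩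
  obtain ⟨i, -, hi⟩ := ht.surjOn hbelow
  obtain ⟨hrow, hcol⟩ := Prod.ext_iff.1 hi
  exact mem_image.2 ⟨i, mem_filter.2 ⟨mem_univ i, hcol⟩, hrow⟩

theorem prod_le_prod_row (ht : IsTableau k lam t) (h : Antitone lam) {R : Type*} [CommSemiring R]
    [PartialOrder R] [IsOrderedRing R] {p : ℕ → R} (hp : Antitone p) (hp0 : ∀ i, 0 ≤ p i)
    {f : Fin k → ℕ} (hf : Function.Injective fun j => ((t j).2, f j)) :
    ∏ j, p (f j) ≤ ∏ j, p (t j).1 := by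
  have hcolumns : ∀ g : Fin k → R,
      ∏ c ∈ range k, ∏ j with (t j).2 = c, g j = ∏ j, g j := fun g =>
    prod_fiberwise_of_maps_to
      (fun j _ => mem_range.2 (mem_youngCells.1 (ht.apply_mem j)).1.2) g
  rw [← hcolumns, ← hcolumns]
  refine prod_le_prod (fun c _ => prod_nonneg fun j _ => hp0 _) fun c _ => ?_
  calc ∏ j with (t j).2 = c, p (f j) = ∏ i ∈ image f {j | (t j).2 = c}, p i :=
        (prod_image (injOn_filter_eq_of_injective_prodMk hf c)).symm
    _ ≤ ∏ i ∈ range #{j | (t j).2 = c}, p i := by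
        rw [← Finset.card_image_of_injOn (injOn_filter_eq_of_injective_prodMk hf c)]
        exact prod_le_prod_range_card hp hp0 _
    _ = ∏ j with (t j).2 = c, p (t j).1 := by
        rw [← ht.image_row_column h,
          prod_image (injOn_filter_eq_of_injective_prodMk ht.injective_swap c)]

theorem prod_le_typeProb (ht : IsTableau k lam t) (h : IsPartitionOf k lam) {β : Type*}
    [Fintype β] {q : β → ℝ} (hq : ∀ b, 0 ≤ q b) (hsum : ∑ b, q b ≤ 1) {w : Fin k → β}
    (hw : Function.Injective fun j => ((t j).2, w j)) :
    ∏ j, q (w j) ≤ typeProb k lam := by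
  obtain ⟨p, rank, hp, hp0, hrank, hpq, hasSum⟩ := exists_antitone_rearrangement hq
  have hpsum : ∑ i ∈ range k, p i ≤ 1 := (sum_le_hasSum _ (fun i _ => hp0 i) hasSum).trans hsum
  calc ∏ j, q (w j) = ∏ j, p (rank (w j)) := by simp only [hpq]
    _ ≤ ∏ j, p (t j).1 :=
        ht.prod_le_prod_row h.1 hp hp0 ((Function.injective_id.prodMap hrank).comp hw)
    _ = ∏ i ∈ range k, p i ^ lam i := ht.prod_row h p
    _ ≤ typeProb k lam := by
        simpa only [typeProb, h.2.2] using
          prod_pow_le_prod_div_sum_pow (range k) lam (fun i _ => hp0 i) hpsum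

theorem typeProb_eq_prod_row (ht : IsTableau k lam t) (h : IsPartitionOf k lam) :
    typeProb k lam = ∏ j, ((lam (t j).1 : ℝ) / k) :=
  (ht.prod_row h fun i => (lam i : ℝ) / k).symm

theorem typeProb_mul_le_typeProb (ht : IsTableau k lam t) (hu : IsTableau k mu u)
    (hv : IsTableau k nu v) (hlam : IsPartitionOf k lam) (hmu : IsPartitionOf k mu)
    (hnu : IsPartitionOf k nu)
    (hinj : Function.Injective fun j => ((t j).2, (u j).1, (v j).1)) :
    typeProb k mu * typeProb k nu ≤ typeProb k lam := by
  let q : Fin k × Fin k → ℝ := fun b => (mu b.1 / k : ℝ) * (nu b.2 / k : ℝ)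
  let w : Fin k → Fin k × Fin k := fun j =>
    (⟨(u j).1, (mem_youngCells.1 (hu.apply_mem j)).1.1⟩,
      ⟨(v j).1, (mem_youngCells.1 (hv.apply_mem j)).1.1⟩)
  have hw : Function.Injective fun j => ((t j).2, w j) := fun i j hij => hinj (by
    simpa only [w, Prod.mk.injEq, Fin.mk.injEq] using hij)
  have hlaw : ∀ {n : ℕ → ℕ}, IsPartitionOf k n → ∑ i : Fin k, (n i : ℝ) / k ≤ 1 := fun {n} hn => by
    rw [Fin.sum_univ_eq_sum_range (fun i => (n i : ℝ) / k), ← sum_div, ← Nat.cast_sum, hn.2.2]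
    exact div_self_le_one _
  have hsum : ∑ b, q b ≤ 1 := by
    simp only [q, Fintype.sum_prod_type]
    rw [← Fintype.sum_mul_sum]
    exact mul_le_one₀ (hlaw hmu) (by positivity) (hlaw hnu)
  calc typeProb k mu * typeProb k nu = ∏ j, q (w j) := by
        rw [hu.typeProb_eq_prod_row hmu, hv.typeProb_eq_prod_row hnu, ← prod_mul_distrib]
    _ ≤ typeProb k lam := ht.prod_le_typeProb hlam (fun b => by positivity) hsum hw

end IsTableau

end Tableaux

section SwapEquivariance

open Equiv MonoidAlgebra

variable {α β γ δ K : Type*} [DecidableEq α]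

/-- Right translation by a transposition of two elements with the same label under `r` multiplies
`f` by `ε`. Row and column groups are generated by such transpositions, so this encodes invariance
(`ε = 1`) under the row group and sign-equivariance (`ε = -1`) under the column group. -/
def IsSwapEquivariant [Mul K] (ε : K) (r : α → β) (f : Perm α → K) : Prop :=
  ∀ i j, i ≠ j → r i = r j → ∀ π, f (π * swap i j) = ε * f π

/-- The span of the functions that are swap-equivariant for some relabelling of `α`. -/
def swapEquivariantSpan [CommSemiring K] (ε : K) (r : α → β) : Submodule K (Perm α → K) :=
  Submodule.span K {f | ∃ x : Perm α, IsSwapEquivariant ε (r ∘ x) f}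

theorem mem_swapEquivariantSpan_of_single_swap_mul [CommSemiring K] {ε : K} {r : α → β}
    {X : MonoidAlgebra K (Perm α)}
    (hX : ∀ i j, i ≠ j → r i = r j → single (swap i j) 1 * X = ε • X)
    (ψ : MonoidAlgebra K (Perm α) →ₗ[K] K) (a : MonoidAlgebra K (Perm α)) :
    (fun π => ψ (single π 1 * (a * X))) ∈ swapEquivariantSpan ε r := by
  induction a using MonoidAlgebra.induction_linear with
  | zero =>
    simp only [zero_mul, mul_zero, map_zero]
    exact Submodule.zero_mem _
  | add a b ha hb =>
    simp only [add_mul, mul_add, map_add]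
    exact Submodule.add_mem _ ha hb
  | single τ c =>
    refine Submodule.subset_span ⟨τ⁻¹, fun i j hij hr π => ?_⟩
    have hsingle : single (swap i j) 1 * single τ c =
        single τ c * single (swap (τ⁻¹ i) (τ⁻¹ j)) 1 := by
      rw [single_mul_single, single_mul_single, swap_mul_eq_mul_swap, mul_comm c]
    calc ψ (single (π * swap i j) 1 * (single τ c * X))
        = ψ (single π 1 * (single (swap i j) 1 * single τ c * X)) := by
          rw [← one_mul (1 : K), ← single_mul_single, one_mul, mul_assoc, mul_assoc]
      _ = ψ (single π 1 * (single τ c * (ε • X))) := by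
          rw [hsingle, mul_assoc, hX _ _ (τ⁻¹.injective.ne hij) hr]
      _ = ε * ψ (single π 1 * (single τ c * X)) := by
          rw [mul_smul_comm, mul_smul_comm, map_smul, smul_eq_mul]

theorem sum_mul_mul_eq_zero_of_isSwapEquivariant [Fintype α] [CommRing K] [IsAddTorsionFree K]
    {c : α → β} {r : α → γ} {s : α → δ} {F G H : Perm α → K}
    (hF : IsSwapEquivariant (-1) c F) (hG : IsSwapEquivariant 1 r G) (hH : IsSwapEquivariant 1 s H)
    (hinj : ¬Function.Injective fun i => (c i, r i, s i)) : ∑ π, F π * G π * H π = 0 := by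
  obtain ⟨i, j, hij, hne⟩ := Function.not_injective_iff.1 hinj
  obtain ⟨hc, hr, hs⟩ : c i = c j ∧ r i = r j ∧ s i = s j := by simpa using hij
  rw [← self_eq_neg, ← sum_neg_distrib]
  refine Fintype.sum_equiv (Equiv.mulRight (swap i j)) _ _ fun π => ?_
  simp only [Equiv.coe_mulRight, hF i j hne hc, hG i j hne hr, hH i j hne hs]
  ring

theorem exists_injective_of_sum_mul_mul_ne_zero [Fintype α] [CommRing K] [IsAddTorsionFree K]
    {c : α → β} {r : α → γ} {s : α → δ} {F G H : Perm α → K}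
    (hF : F ∈ swapEquivariantSpan (-1) c) (hG : G ∈ swapEquivariantSpan 1 r)
    (hH : H ∈ swapEquivariantSpan 1 s) (hne : ∑ π, F π * G π * H π ≠ 0) :
    ∃ x y z : Perm α, Function.Injective fun i => (c (x i), r (y i), s (z i)) := by
  by_contra! hnot
  have hmem := Submodule.mul_mem_mul (Submodule.mul_mem_mul hF hG) hH
  rw [swapEquivariantSpan, swapEquivariantSpan, swapEquivariantSpan, Submodule.span_mul_span,
    Submodule.span_mul_span] at hmem
  let total : (Perm α → K) →ₗ[K] K := ∑ π, LinearMap.proj π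
  have htotal : ∀ f, total f = ∑ π, f π := fun f => by simp [total]
  refine hne ((htotal _).symm.trans (LinearMap.mem_ker.1 (Submodule.span_le.2 ?_ hmem)))
  rintro _ ⟨_, ⟨F, ⟨x, hF⟩, G, ⟨y, hG⟩, rfl⟩, H, ⟨z, hH⟩, rfl⟩
  exact (htotal _).trans (sum_mul_mul_eq_zero_of_isSwapEquivariant hF hG hH (hnot x y z))

/-- The weighted sum of the Young subgroup of permutations preserving the labels `r`. -/
def weightedYoungSum [Fintype α] [DecidableEq β] [Semiring K] (weight : Perm α → K) (r : α → β) :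
    MonoidAlgebra K (Perm α) :=
  ∑ π with ∀ j, r (π j) = r j, single π (weight π)

theorem single_swap_mul_weightedYoungSum [Fintype α] [DecidableEq β] [CommSemiring K]
    {weight : Perm α → K} {ε : K} {r : α → β} {i j : α}
    (hweight : ∀ π, weight (swap i j * π) = ε * weight π) (hr : r i = r j) :
    single (swap i j) 1 * weightedYoungSum weight r = ε • weightedYoungSum weight r := by
  have hswap : ∀ l, r (swap i j l) = r l := fun l => by
    rw [swap_apply_def]
    split_ifs <;> simp_all
  simp only [weightedYoungSum, mul_sum, smul_sum, single_mul_single, one_mul]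
  refine sum_equiv (Equiv.mulLeft (swap i j)) (fun π => ?_) fun π _ => ?_
  · simp only [mem_filter, mem_univ, true_and, Equiv.coe_mulLeft, Perm.mul_apply, hswap]
  · rw [Equiv.coe_mulLeft, smul_single, smul_eq_mul, ← hweight, swap_mul_self_mul]

end SwapEquivariance

section Characters

open Equiv MonoidAlgebra

theorem exists_dual_forall_trace_restrict_eq_sum {K V : Type*} [Field K] [AddCommGroup V]
    [Module K V] (W : Submodule K V) [FiniteDimensional K W] :
    ∃ (b : Fin (Module.finrank K W) → W) (ψ : Fin (Module.finrank K W) → V →ₗ[K] K),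
      ∀ (T : Module.End K V) (hT : ∀ x ∈ W, T x ∈ W),
        LinearMap.trace K W (T.restrict hT) = ∑ i, ψ i (T (b i)) := by
  let b := Module.finBasis K W
  choose ψ hψ using fun i => LinearMap.exists_extend (b.coord i)
  refine ⟨b, ψ, fun T hT => ?_⟩
  rw [LinearMap.trace_eq_matrix_trace K b, Matrix.trace]
  refine sum_congr rfl fun i _ => ?_
  rw [Matrix.diag_apply, LinearMap.toMatrix_apply, ← Module.Basis.coord_apply, ← hψ i]
  rfl

theorem youngSym_eq (k : ℕ) (t : Fin k → ℕ × ℕ) :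
    youngSym k t = weightedYoungSum (fun π => ((Perm.sign π : ℤ) : ℂ)) (fun j => (t j).2) *
      weightedYoungSum (fun _ => 1) fun j => (t j).1 := by
  unfold youngSym weightedYoungSum
  congr!

theorem youngIdealChar_eq_sum (k : ℕ) (t : Fin k → ℕ × ℕ) :
    ∃ (n : ℕ) (a : Fin n → MonoidAlgebra ℂ (Perm (Fin k)))
      (ψ : Fin n → MonoidAlgebra ℂ (Perm (Fin k)) →ₗ[ℂ] ℂ),
      youngIdealChar k t = ∑ i, fun π => ψ i (single π 1 * (a i * youngSym k t)) := by
  obtain ⟨b, ψ, htrace⟩ := exists_dual_forall_trace_restrict_eq_sum (youngIdeal k t)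
  choose a ha using fun i => (b i).2
  refine ⟨_, a, ψ, funext fun π => ?_⟩
  rw [youngIdealChar, htrace, Finset.sum_apply]
  refine sum_congr rfl fun i _ => ?_
  rw [← ha i]
  rfl

theorem youngIdealChar_mem_swapEquivariantSpan_column (k : ℕ) (t : Fin k → ℕ × ℕ) :
    youngIdealChar k t ∈ swapEquivariantSpan (-1) fun j => (t j).2 := by
  obtain ⟨n, a, ψ, hchar⟩ := youngIdealChar_eq_sum k t
  rw [hchar, youngSym_eq]
  refine Submodule.sum_mem _ fun i _ => ?_
  simpa only [LinearMap.comp_apply, LinearMap.mulRight_apply, mul_assoc] using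
    mem_swapEquivariantSpan_of_single_swap_mul
      (fun _ _ hne hr => single_swap_mul_weightedYoungSum
        (fun π => by simp [Perm.sign_mul, Perm.sign_swap hne]) hr)
      (ψ i ∘ₗ LinearMap.mulRight ℂ (weightedYoungSum (fun _ => 1) fun j => (t j).1)) (a i)

theorem youngIdealChar_mem_swapEquivariantSpan_row (k : ℕ) (t : Fin k → ℕ × ℕ) :
    youngIdealChar k t ∈ swapEquivariantSpan 1 fun j => (t j).1 := by
  obtain ⟨n, a, ψ, hchar⟩ := youngIdealChar_eq_sum k t
  rw [hchar, youngSym_eq]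
  refine Submodule.sum_mem _ fun i _ => ?_
  simp only [← mul_assoc (a i)]
  exact mem_swapEquivariantSpan_of_single_swap_mul
    (fun _ _ _ hr => single_swap_mul_weightedYoungSum (fun _ => (one_mul 1).symm) hr) (ψ i) _

end Characters

theorem exists_isTableau_injective {k : ℕ} {lam mu nu : ℕ → ℕ}
    {chi : (k : ℕ) → (ℕ → ℕ) → Equiv.Perm (Fin k) → ℂ} (hchi : IsCharacterFamily chi)
    {g : (k : ℕ) → (ℕ → ℕ) → (ℕ → ℕ) → (ℕ → ℕ) → ℕ} (hg : IsKroneckerFamily chi g)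
    (hlam : IsPartitionOf k lam) (hmu : IsPartitionOf k mu) (hnu : IsPartitionOf k nu)
    (hg0 : g k lam mu nu ≠ 0) :
    ∃ t u v, IsTableau k lam t ∧ IsTableau k mu u ∧ IsTableau k nu v ∧
      Function.Injective fun j => ((t j).2, (u j).1, (v j).1) := by
  obtain ⟨t, ht⟩ := hlam.exists_isTableau
  obtain ⟨u, hu⟩ := hmu.exists_isTableau
  obtain ⟨v, hv⟩ := hnu.exists_isTableau
  have hne : ∑ π, chi k lam π * chi k mu π * chi k nu π ≠ 0 := fun h => hg0 (by
    simpa [h] using hg k lam mu nu hlam hmu hnu)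
  rw [funext (hchi k lam hlam t ht), funext (hchi k mu hmu u hu),
    funext (hchi k nu hnu v hv)] at hne
  obtain ⟨x, y, z, hinj⟩ := exists_injective_of_sum_mul_mul_ne_zero
    (youngIdealChar_mem_swapEquivariantSpan_column k t)
    (youngIdealChar_mem_swapEquivariantSpan_row k u)
    (youngIdealChar_mem_swapEquivariantSpan_row k v) hne
  exact ⟨t ∘ x, u ∘ y, v ∘ z, ht.comp_perm x, hu.comp_perm y, hv.comp_perm z, hinj⟩

theorem stmt_17_general {k : ℕ}
    (chi : (k : ℕ) → (ℕ → ℕ) → Equiv.Perm (Fin k) → ℂ) (hchi : IsCharacterFamily chi)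
    (g : (k : ℕ) → (ℕ → ℕ) → (ℕ → ℕ) → (ℕ → ℕ) → ℕ) (hg : IsKroneckerFamily chi g)
    (lam mu nu : ℕ → ℕ)
    (hlam : IsPartitionOf k lam) (hmu : IsPartitionOf k mu) (hnu : IsPartitionOf k nu)
    (hg0 : g k lam mu nu ≠ 0) :
    -(∑ i ∈ Finset.range k, ((lam i : ℝ) / k) * Real.log ((lam i : ℝ) / k)) ≤
      -(∑ i ∈ Finset.range k, ((mu i : ℝ) / k) * Real.log ((mu i : ℝ) / k)) +
        -(∑ i ∈ Finset.range k, ((nu i : ℝ) / k) * Real.log ((nu i : ℝ) / k)) := by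
  obtain ⟨t, u, v, ht, hu, hv, hinj⟩ := exists_isTableau_injective hchi hg hlam hmu hnu hg0
  have hprob : typeProb k mu * typeProb k nu ≤ typeProb k lam :=
    ht.typeProb_mul_le_typeProb hu hv hlam hmu hnu hinj
  have hlog : Real.log (typeProb k mu) + Real.log (typeProb k nu) ≤ Real.log (typeProb k lam) := by
    rw [← Real.log_mul (typeProb_pos k mu).ne' (typeProb_pos k nu).ne']
    exact Real.log_le_log (mul_pos (typeProb_pos k mu) (typeProb_pos k nu)) hprob
  simp only [sum_div_mul_log_div_eq]
  rw [← neg_add, ← add_div]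
  gcongr

/-- If `g_{lam mu nu} ≠ 0` for partitions `lam, mu, nu ⊢ k` and (stretching property) the
Kronecker coefficients `g_{N·lam, N·mu, N·nu}` are non-zero for all positive integers `N`,
then `H(lam/k) ≤ H(mu/k) + H(nu/k)` for the Shannon entropy `H`. -/
theorem stmt_17 {k : ℕ} (hk : 0 < k)
    (chi : (k : ℕ) → (ℕ → ℕ) → Equiv.Perm (Fin k) → ℂ) (hchi : IsCharacterFamily chi)
    (g : (k : ℕ) → (ℕ → ℕ) → (ℕ → ℕ) → (ℕ → ℕ) → ℕ) (hg : IsKroneckerFamily chi g)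
    (lam mu nu : ℕ → ℕ)
    (hlam : IsPartitionOf k lam) (hmu : IsPartitionOf k mu) (hnu : IsPartitionOf k nu)
    (hg0 : g k lam mu nu ≠ 0)
    (hstretch : ∀ N : ℕ, 0 < N →
      g (N * k) (fun i => N * lam i) (fun i => N * mu i) (fun i => N * nu i) ≠ 0) :
    -(∑ i ∈ Finset.range k, ((lam i : ℝ) / k) * Real.log ((lam i : ℝ) / k)) ≤
      -(∑ i ∈ Finset.range k, ((mu i : ℝ) / k) * Real.log ((mu i : ℝ) / k)) +
        -(∑ i ∈ Finset.range k, ((nu i : ℝ) / k) * Real.log ((nu i : ℝ) / k)) :=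
  stmt_17_general chi hchi g hg lam mu nu hlam hmu hnu hg0

end
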